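/- arXiv:1703.10081 — 2 statements merged into one kernel-verified Lean document; each statement's English description precedes it below -/
import Mathlib

section
/- A recurrent set S ⊆ A* is completely reducible over ℚ if and only if its eventual kernel is trivial: EK(S) = {0}. -/
namespace Birec

variable {A : Type*}

/-- The left quotient `u⁻¹S = {v | u v ∈ S}`. -/
def leftQuot (S : Set (List A)) (u : List A) : Set (List A) := {v | u ++ v ∈ S}

/-- A language is recognizable iff it has finitely many left quotients (Nerode). -/
def Recognizable (S : Set (List A)) : Prop := (Set.range (leftQuot S)).Finite

/-- The reversal `S̃` of a language. -/
def langRev (S : Set (List A)) : Set (List A) := {w | w.reverse ∈ S}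

/-- A recognizable set is recurrent if its minimal automaton (whose states are the
nonempty left quotients) is strongly connected. -/
def Recurrent (S : Set (List A)) : Prop :=
  Recognizable S ∧
    ∀ u v : List A, (leftQuot S u).Nonempty → (leftQuot S v).Nonempty →
      ∃ w : List A, leftQuot S (u ++ w) = leftQuot S v

/-- A set is birecurrent if it is recurrent together with its reversal. -/
def Birecurrent (S : Set (List A)) : Prop := Recurrent S ∧ Recurrent (langRev S)

/-- A set is dense if every word is a factor of one of its words. -/
def LangDense (S : Set (List A)) : Prop := ∀ v : List A, ∃ u w : List A, u ++ v ++ w ∈ S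

end Birec
namespace Birec

variable {A : Type*}

/-- The characteristic series of a language, as a function `A* → ℚ`. -/
noncomputable def charFun (S : Set (List A)) : List A → ℚ := S.indicator 1

/-- The shift operator `τ ↦ τ · u`, where `(τ · u)(v) = τ(u v)`; this is the linear
action underlying the syntactic representation. -/
def shiftOp (u : List A) : (List A → ℚ) →ₗ[ℚ] (List A → ℚ) where
  toFun τ := fun v => τ (u ++ v)
  map_add' := fun _ _ => rfl
  map_smul' := fun _ _ => rfl

/-- The syntactic space of a series `σ`: the subspace of `ℚ⟨⟨A⟩⟩` spanned by the
series `σ · u` for `u ∈ A*`. -/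
def synSpace (σ : List A → ℚ) : Submodule ℚ (List A → ℚ) :=
  Submodule.span ℚ (Set.range fun u : List A => shiftOp u σ)

/-- A subspace is invariant if it is stable under all shift operators. -/
def InvariantSub (W : Submodule ℚ (List A → ℚ)) : Prop :=
  ∀ τ ∈ W, ∀ u : List A, shiftOp u τ ∈ W

/-- An invariant subspace is irreducible if it is nonzero and has no nontrivial
invariant subspace. -/
def IrreducibleSub (W : Submodule ℚ (List A → ℚ)) : Prop :=
  W ≠ ⊥ ∧ ∀ W' : Submodule ℚ (List A → ℚ), W' ≤ W → InvariantSub W' → W' = ⊥ ∨ W' = W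

/-- A series is completely reducible if its syntactic space is a direct sum of
invariant irreducible subspaces (equivalently, its syntactic representation is a
direct sum of irreducible representations). -/
def CompletelyReducibleSeries (σ : List A → ℚ) : Prop :=
  ∃ (n : ℕ) (W : Fin n → Submodule ℚ (List A → ℚ)),
    (∀ i, W i ≤ synSpace σ ∧ InvariantSub (W i) ∧ IrreducibleSub (W i)) ∧
    iSupIndep W ∧ (⨆ i, W i) = synSpace σ

/-- A language is completely reducible if its characteristic series is. -/
noncomputable def CompletelyReducibleLang (S : Set (List A)) : Prop :=
  CompletelyReducibleSeries (charFun S)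

/-- The rank of the element `ψ_σ(u)` of the syntactic monoid, i.e. the dimension of the
image of the syntactic space under the shift by `u`. -/
noncomputable def psiRank (σ : List A → ℚ) (u : List A) : ℕ :=
  Module.finrank ℚ ↥(Submodule.map (shiftOp u) (synSpace σ))

/-- `u` induces an element of minimal nonzero rank of the syntactic monoid. -/
def IsMinNonzeroPsiRank (σ : List A → ℚ) (u : List A) : Prop :=
  psiRank σ u ≠ 0 ∧ ∀ v : List A, psiRank σ v ≠ 0 → psiRank σ u ≤ psiRank σ v

/-- The eventual kernel `EK(S)`: the intersection (inside the syntactic space) of the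
kernels of all elements of minimal nonzero rank of the syntactic monoid. -/
noncomputable def EK (S : Set (List A)) : Submodule ℚ (List A → ℚ) :=
  synSpace (charFun S) ⊓
    ⨅ u ∈ {u : List A | IsMinNonzeroPsiRank (charFun S) u}, LinearMap.ker (shiftOp u)

/-- The eventual range `ER(S)`: the subspace spanned by the images of all elements of
minimal nonzero rank of the syntactic monoid. -/
noncomputable def ER (S : Set (List A)) : Submodule ℚ (List A → ℚ) :=
  ⨆ u ∈ {u : List A | IsMinNonzeroPsiRank (charFun S) u},
    Submodule.map (shiftOp u) (synSpace (charFun S))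

end Birec

namespace Birec

variable {A : Type*}

/-- A subspace stable under a finite multiplicatively closed family of injective endomorphisms
has a complement stable under the same family. -/
lemma exists_isCompl_stable {E : Type*} [AddCommGroup E] [Module ℚ E] [FiniteDimensional ℚ E]
    {N : Set (E →ₗ[ℚ] E)} (hfin : N.Finite) (hne : N.Nonempty)
    (hmul : ∀ g ∈ N, ∀ h ∈ N, g ∘ₗ h ∈ N) (hinj : ∀ g ∈ N, Function.Injective g)
    (U : Submodule ℚ E) (hU : ∀ g ∈ N, ∀ x ∈ U, g x ∈ U) :
    ∃ C : Submodule ℚ E, IsCompl U C ∧ ∀ g ∈ N, ∀ x ∈ C, g x ∈ C := by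
  classical
  let b := Module.finBasis ℚ E
  let s := hfin.toFinset
  let B : LinearMap.BilinForm ℚ E := LinearMap.mk₂ ℚ
    (fun x y => ∑ g ∈ s, ∑ i, b.repr (g x) i * b.repr (g y) i)
    (by intros; simp [add_mul, Finset.sum_add_distrib])
    (by intros; simp [mul_assoc, Finset.mul_sum])
    (by intros; simp [mul_add, Finset.sum_add_distrib])
    (by intros; simp [mul_left_comm, Finset.mul_sum])
  have hB (x y) : B x y = ∑ g ∈ s, ∑ i, b.repr (g x) i * b.repr (g y) i := rfl
  have hrefl : B.IsRefl := by
    intro x y h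
    rw [hB] at h ⊢
    simpa only [mul_comm] using h
  have hpos (x) (h : B x x = 0) : x = 0 := by
    obtain ⟨g, hg⟩ := hne
    rw [hB, Finset.sum_eq_zero_iff_of_nonneg
      fun g _ => Finset.sum_nonneg fun i _ => mul_self_nonneg _] at h
    have h1 := h g (hfin.mem_toFinset.2 hg)
    rw [Finset.sum_eq_zero_iff_of_nonneg fun i _ => mul_self_nonneg _] at h1
    apply hinj g hg
    rw [map_zero]
    apply b.repr.injective
    ext i
    simpa using h1 i (Finset.mem_univ i)
  have hinv (h) (hh : h ∈ N) (x y) : B (h x) (h y) = B x y := by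
    have hsurj : Function.Surjective h := LinearMap.injective_iff_surjective.1 (hinj h hh)
    have hi : Set.InjOn (fun g : E →ₗ[ℚ] E => g ∘ₗ h) s := by
      intro g _ g' _ e
      exact (LinearMap.cancel_right hsurj).1 e
    have him : s.image (fun g : E →ₗ[ℚ] E => g ∘ₗ h) = s := by
      apply Finset.eq_of_subset_of_card_le
      · intro k hk
        obtain ⟨g, hg, rfl⟩ := Finset.mem_image.1 hk
        exact hfin.mem_toFinset.2 (hmul g (hfin.mem_toFinset.1 hg) h hh)
      · rw [Finset.card_image_of_injOn hi]
    rw [hB, hB]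
    conv_rhs => rw [← him, Finset.sum_image hi]
    rfl
  refine ⟨B.orthogonal U, ?_, ?_⟩
  · rw [LinearMap.BilinForm.isCompl_orthogonal_iff_disjoint hrefl, Submodule.disjoint_def]
    exact fun x hx hx' => hpos x (hx' x hx)
  · intro g hg y hy x hx
    have hinj' : Function.Injective (g.restrict (hU g hg)) :=
      fun u v huv => Subtype.ext (hinj g hg (congrArg Subtype.val huv))
    obtain ⟨⟨x', hx'⟩, e⟩ := LinearMap.injective_iff_surjective.1
      hinj' ⟨x, hx⟩
    obtain rfl : g x' = x := congrArg Subtype.val e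
    exact (hinv g hg x' y).trans (hy x' hx')

/-- If every invariant subspace of a finite-dimensional `V` has an invariant complement in `V`,
then every invariant subspace of `V` is a direct sum of invariant irreducible ones. -/
lemma exists_finset_irreducible {V : Submodule ℚ (List A → ℚ)} [FiniteDimensional ℚ V]
    (hV : ∀ U ≤ V, InvariantSub U → ∃ W ≤ V, InvariantSub W ∧ U ⊓ W = ⊥ ∧ U ⊔ W = V)
    (n : ℕ) : ∀ U ≤ V, InvariantSub U → Module.finrank ℚ U ≤ n →
      ∃ s : Finset (Submodule ℚ (List A → ℚ)), s.SupIndep id ∧ s.sup id = U ∧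
        ∀ W ∈ s, W ≤ V ∧ InvariantSub W ∧ IrreducibleSub W := by
  classical
  induction n with
  | zero =>
    intro U hUV _ h
    have : FiniteDimensional ℚ U := Submodule.finiteDimensional_of_le hUV
    exact ⟨∅, Finset.supIndep_empty _,
      by simp [(Submodule.finrank_eq_zero.1 (Nat.le_zero.1 h))], by simp⟩
  | succ n ih =>
    intro U hUV hU h
    by_cases hU0 : U = ⊥
    · exact ⟨∅, Finset.supIndep_empty _, by simp [hU0], by simp⟩
    obtain ⟨P, ⟨hPU, hP, hP0⟩, hmin⟩ := (InvImage.wf (fun P : Submodule ℚ (List A → ℚ) =>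
      Module.finrank ℚ P) wellFounded_lt).has_min
      {P | P ≤ U ∧ InvariantSub P ∧ P ≠ ⊥} ⟨U, le_rfl, hU, hU0⟩
    have hfd {Q : Submodule ℚ (List A → ℚ)} (hQ : Q ≤ V) : FiniteDimensional ℚ Q :=
      Submodule.finiteDimensional_of_le hQ
    have := hfd (hPU.trans hUV)
    have hPirr : IrreducibleSub P := by
      refine ⟨hP0, fun Q hQ hQi => or_iff_not_imp_left.2 fun hQ0 => ?_⟩
      exact Submodule.eq_of_le_of_finrank_le hQ (not_lt.1 (hmin Q ⟨hQ.trans hPU, hQi, hQ0⟩))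
    obtain ⟨W, hWV, hW, hPW, hPW'⟩ := hV P (hPU.trans hUV) hP
    have hsup : P ⊔ W ⊓ U = U := by
      rw [← sup_inf_assoc_of_le W hPU, hPW', inf_eq_right.2 hUV]
    have hdis : P ⊓ (W ⊓ U) = ⊥ := by rw [← inf_assoc, hPW, bot_inf_eq]
    have := hfd (inf_le_right.trans hUV : W ⊓ U ≤ V)
    have hrank := Submodule.finrank_sup_add_finrank_inf_eq P (W ⊓ U)
    rw [hsup, hdis, finrank_bot] at hrank
    have hPpos : Module.finrank ℚ P ≠ 0 := fun h => hP0 (Submodule.finrank_eq_zero.1 h)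
    obtain ⟨s, hs, hsU, hsirr⟩ := ih (W ⊓ U) (inf_le_right.trans hUV)
      (fun τ hτ u => ⟨hW τ hτ.1 u, hU τ hτ.2 u⟩) (by omega)
    refine ⟨insert P s, hs.insert ?_, ?_, ?_⟩
    · rw [hsU]; exact disjoint_iff.2 hdis
    · rw [Finset.sup_insert, hsU]; exact hsup
    · intro Q hQ
      obtain rfl | hQ := Finset.mem_insert.1 hQ
      · exact ⟨hPU.trans hUV, hP, hPirr⟩
      · exact hsirr Q hQ

lemma completelyReducibleSeries_of_compl {σ : List A → ℚ} [FiniteDimensional ℚ (synSpace σ)]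
    (hinv : InvariantSub (synSpace σ))
    (hV : ∀ U ≤ synSpace σ, InvariantSub U →
      ∃ W ≤ synSpace σ, InvariantSub W ∧ U ⊓ W = ⊥ ∧ U ⊔ W = synSpace σ) :
    CompletelyReducibleSeries σ := by
  obtain ⟨s, hs, hsup, hirr⟩ := exists_finset_irreducible hV _ _ le_rfl hinv le_rfl
  refine ⟨s.card, fun i => (s.equivFin.symm i : Submodule ℚ (List A → ℚ)),
    fun i => hirr _ (s.equivFin.symm i).2, ?_, ?_⟩
  · exact ((iSupIndep_comp_coe_iff_supIndep (f := id)).2 hs).comp s.equivFin.symm.injective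
  · rw [← hsup, Finset.sup_eq_iSup, iSup_subtype']
    exact s.equivFin.symm.iSup_comp (g := fun x : s => (x : Submodule ℚ (List A → ℚ)))

lemma shiftOp_append (u v : List A) (τ : List A → ℚ) :
    shiftOp (u ++ v) τ = shiftOp v (shiftOp u τ) := by
  ext w
  simp [shiftOp]

lemma shiftOp_mem_synSpace (σ : List A → ℚ) (u : List A) : shiftOp u σ ∈ synSpace σ :=
  Submodule.subset_span ⟨u, rfl⟩

lemma self_mem_synSpace (σ : List A → ℚ) : σ ∈ synSpace σ := shiftOp_mem_synSpace σ []

lemma synSpace_le {σ : List A → ℚ} {W : Submodule ℚ (List A → ℚ)} (hW : InvariantSub W)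
    (hσ : σ ∈ W) : synSpace σ ≤ W := by
  rw [synSpace, Submodule.span_le]
  rintro _ ⟨u, rfl⟩
  exact hW σ hσ u

lemma invariantSub_synSpace (σ : List A → ℚ) : InvariantSub (synSpace σ) := by
  intro τ hτ u
  refine (Submodule.span_le (p := (synSpace σ).comap (shiftOp u))).2 ?_ hτ
  rintro _ ⟨v, rfl⟩
  change shiftOp u (shiftOp v σ) ∈ synSpace σ
  simpa only [shiftOp_append] using shiftOp_mem_synSpace σ (v ++ u)

lemma InvariantSub.inf {U W : Submodule ℚ (List A → ℚ)} (hU : InvariantSub U)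
    (hW : InvariantSub W) : InvariantSub (U ⊓ W) :=
  fun τ hτ u => ⟨hU τ hτ.1 u, hW τ hτ.2 u⟩

lemma InvariantSub.sup {U W : Submodule ℚ (List A → ℚ)} (hU : InvariantSub U)
    (hW : InvariantSub W) : InvariantSub (U ⊔ W) := by
  intro τ hτ u
  obtain ⟨x, hx, y, hy, rfl⟩ := Submodule.mem_sup.1 hτ
  rw [map_add]
  exact Submodule.add_mem_sup (hU x hx u) (hW y hy u)

section Rank

variable {σ : List A → ℚ} [FiniteDimensional ℚ (synSpace σ)]

lemma psiRank_append_le (a u b : List A) : psiRank σ (a ++ u ++ b) ≤ psiRank σ u := by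
  have hle : Submodule.map (shiftOp (a ++ u ++ b)) (synSpace σ) ≤
      Submodule.map (shiftOp b) (Submodule.map (shiftOp u) (synSpace σ)) := by
    rintro _ ⟨τ, hτ, rfl⟩
    rw [shiftOp_append, shiftOp_append]
    exact ⟨_, ⟨_, invariantSub_synSpace σ τ hτ a, rfl⟩, rfl⟩
  exact (Submodule.finrank_mono hle).trans (Submodule.finrank_map_le _ _)

lemma psiRank_ne_zero_of_apply_ne_zero {u : List A} {τ : List A → ℚ} (hτ : τ ∈ synSpace σ)
    (h : shiftOp u τ ≠ 0) : psiRank σ u ≠ 0 := by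
  intro h0
  rw [psiRank, Submodule.finrank_eq_zero] at h0
  exact h ((Submodule.mem_bot ℚ).1 (h0 ▸ Submodule.mem_map_of_mem hτ))

lemma exists_apply_ne_zero {u : List A} (h : psiRank σ u ≠ 0) :
    ∃ a : List A, shiftOp (a ++ u) σ ≠ 0 := by
  by_contra! h0
  apply h
  rw [psiRank, Submodule.finrank_eq_zero, eq_bot_iff, Submodule.map_le_iff_le_comap, synSpace,
    Submodule.span_le]
  rintro _ ⟨a, rfl⟩
  exact (Submodule.mem_bot ℚ).2 (by simpa only [shiftOp_append] using h0 a)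

/-- If multiplying by `z` does not lower the rank of `u`, then `z` is injective on the image
of `u`. -/
lemma eq_zero_of_psiRank_le {u z : List A} (h : psiRank σ u ≤ psiRank σ (u ++ z))
    {τ : List A → ℚ} (hτ : τ ∈ Submodule.map (shiftOp u) (synSpace σ)) (h0 : shiftOp z τ = 0) :
    τ = 0 := by
  let g := (shiftOp z).domRestrict (Submodule.map (shiftOp u) (synSpace σ))
  have hcomp : shiftOp (u ++ z) = shiftOp z ∘ₗ shiftOp u :=
    LinearMap.ext fun τ => shiftOp_append u z τ
  have hrange : Module.finrank ℚ (LinearMap.range g) = psiRank σ (u ++ z) := by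
    rw [LinearMap.range_domRestrict, psiRank, hcomp, Submodule.map_comp]
  have hrk := LinearMap.finrank_range_add_finrank_ker g
  rw [hrange] at hrk
  have hker : LinearMap.ker g = ⊥ := by
    rw [← Submodule.finrank_eq_zero]
    unfold psiRank at h hrk
    omega
  have : (⟨τ, hτ⟩ : Submodule.map (shiftOp u) (synSpace σ)) ∈ LinearMap.ker g := h0
  rw [hker] at this
  exact congrArg Subtype.val ((Submodule.mem_bot ℚ).1 this)

lemma IsMinNonzeroPsiRank.of_ne_zero {u a b : List A} (hu : IsMinNonzeroPsiRank σ u)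
    (h : psiRank σ (a ++ u ++ b) ≠ 0) : IsMinNonzeroPsiRank σ (a ++ u ++ b) :=
  ⟨h, fun v hv => (psiRank_append_le a u b).trans (hu.2 v hv)⟩

/-- Some element of minimal nonzero rank fixes the series. -/
lemma exists_isMin_fix (hσ : σ ≠ 0)
    (hrec : ∀ a, shiftOp a σ ≠ 0 → ∃ b, shiftOp (a ++ b) σ = σ) :
    ∃ f, shiftOp f σ = σ ∧ IsMinNonzeroPsiRank σ f := by
  obtain ⟨u, hu, hmin⟩ := (InvImage.wf (psiRank σ) wellFounded_lt).has_min
    {u | psiRank σ u ≠ 0}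
    ⟨[], psiRank_ne_zero_of_apply_ne_zero (self_mem_synSpace σ) hσ⟩
  obtain ⟨a, ha⟩ := exists_apply_ne_zero hu
  obtain ⟨b, hb⟩ := hrec _ ha
  refine ⟨a ++ u ++ b, hb, IsMinNonzeroPsiRank.of_ne_zero
    ⟨hu, fun v hv => not_lt.1 (hmin v hv)⟩ ?_⟩
  exact psiRank_ne_zero_of_apply_ne_zero (self_mem_synSpace σ) (hb.symm ▸ hσ)

end Rank

/-- The eventual kernel of a series. -/
def eventualKer (σ : List A → ℚ) : Submodule ℚ (List A → ℚ) :=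
  synSpace σ ⊓ ⨅ u ∈ {u : List A | IsMinNonzeroPsiRank σ u}, LinearMap.ker (shiftOp u)

lemma mem_eventualKer {σ τ : List A → ℚ} :
    τ ∈ eventualKer σ ↔ τ ∈ synSpace σ ∧ ∀ u, IsMinNonzeroPsiRank σ u → shiftOp u τ = 0 := by
  simp [eventualKer, Submodule.mem_iInf]

lemma invariantSub_eventualKer (σ : List A → ℚ) [FiniteDimensional ℚ (synSpace σ)] :
    InvariantSub (eventualKer σ) := by
  intro τ hτ u
  rw [mem_eventualKer] at hτ ⊢
  refine ⟨invariantSub_synSpace σ τ hτ.1 u, fun v hv => ?_⟩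
  rw [← shiftOp_append]
  by_contra h
  have := hv.of_ne_zero (a := u) (b := [])
    (by simpa using psiRank_ne_zero_of_apply_ne_zero hτ.1 h)
  exact h (by simpa using hτ.2 _ this)

/-- In a completely reducible series every invariant subspace has an invariant complement. -/
lemma CompletelyReducibleSeries.exists_compl {σ : List A → ℚ} [FiniteDimensional ℚ (synSpace σ)]
    (h : CompletelyReducibleSeries σ) {K : Submodule ℚ (List A → ℚ)} (hK : InvariantSub K)
    (hKV : K ≤ synSpace σ) :
    ∃ W, InvariantSub W ∧ K ⊓ W = ⊥ ∧ K ⊔ W = synSpace σ := by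
  obtain ⟨n, P, hP, -, hsup⟩ := h
  obtain ⟨W, ⟨hWV, hW, hKW⟩, hmax⟩ := (InvImage.wf (fun P : Submodule ℚ (List A → ℚ) =>
    Module.finrank ℚ (synSpace σ) - Module.finrank ℚ P) wellFounded_lt).has_min
    {W | W ≤ synSpace σ ∧ InvariantSub W ∧ K ⊓ W = ⊥}
    ⟨⊥, bot_le, fun τ hτ u => by simp_all, by simp⟩
  refine ⟨W, hW, hKW, le_antisymm (sup_le hKV hWV) ?_⟩
  rw [← hsup]
  refine iSup_le fun i => ?_
  obtain ⟨hPV, hPi, hP0, hPirr⟩ := hP i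
  obtain h | h := hPirr (P i ⊓ (K ⊔ W)) inf_le_left (hPi.inf (hK.sup hW))
  · exfalso
    have hdis : K ⊓ (W ⊔ P i) = ⊥ := by
      rw [← disjoint_iff] at h hKW ⊢
      exact hKW.disjoint_sup_right_of_disjoint_sup_left h.symm
    have hlt : W < W ⊔ P i := by
      refine left_lt_sup.2 fun hle => hP0 ?_
      rwa [inf_eq_left.2 (hle.trans le_sup_right)] at h
    have hle : W ⊔ P i ≤ synSpace σ := sup_le hWV hPV
    have := Submodule.finiteDimensional_of_le hle
    have h1 := Submodule.finrank_lt_finrank_of_lt hlt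
    have h2 := Submodule.finrank_mono hle
    refine hmax (W ⊔ P i) ⟨hle, hW.sup hPi, hdis⟩ ?_
    simp only [InvImage]
    omega
  · exact inf_eq_left.1 h

lemma eventualKer_eq_bot_of_completelyReducible {σ : List A → ℚ}
    [FiniteDimensional ℚ (synSpace σ)] (h : CompletelyReducibleSeries σ) {f : List A}
    (hf : shiftOp f σ = σ) (hmin : IsMinNonzeroPsiRank σ f) : eventualKer σ = ⊥ := by
  obtain ⟨W, hW, hKW, hsup⟩ := h.exists_compl (invariantSub_eventualKer σ) inf_le_left
  obtain ⟨k, hk, w, hw, e⟩ := Submodule.mem_sup.1 (hsup ▸ self_mem_synSpace σ)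
  have hσW : σ ∈ W := by
    rw [← hf, ← e, map_add, (mem_eventualKer.1 hk).2 f hmin, zero_add]
    exact hW w hw f
  have hle : eventualKer σ ≤ W := inf_le_left.trans (synSpace_le hW hσW)
  rwa [inf_eq_left.2 hle] at hKW

/-- A series with trivial eventual kernel has a complemented lattice of invariant subspaces. -/
lemma exists_compl_of_eventualKer_eq_bot {σ : List A → ℚ}
    (hfin : (Set.range fun u : List A => shiftOp u σ).Finite)
    [FiniteDimensional ℚ (synSpace σ)]
    (hrec : ∀ a, shiftOp a σ ≠ 0 → ∃ b, shiftOp (a ++ b) σ = σ) {f : List A} (hσ : σ ≠ 0)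
    (hf : shiftOp f σ = σ) (hmin : IsMinNonzeroPsiRank σ f) (hEK : eventualKer σ = ⊥)
    {U : Submodule ℚ (List A → ℚ)} (hUV : U ≤ synSpace σ) (hU : InvariantSub U) :
    ∃ W ≤ synSpace σ, InvariantSub W ∧ U ⊓ W = ⊥ ∧ U ⊔ W = synSpace σ := by
  classical
  let V := synSpace σ
  let E := Submodule.map (shiftOp f) V
  have hEV : E ≤ V := Submodule.map_le_iff_le_comap.2 fun τ hτ => invariantSub_synSpace σ τ hτ f
  have hσE : σ ∈ E := ⟨σ, self_mem_synSpace σ, hf⟩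
  have hmaps (w : List A) : ∀ τ ∈ E, shiftOp (w ++ f) τ ∈ E := fun τ hτ => by
    rw [shiftOp_append]
    exact Submodule.mem_map_of_mem (invariantSub_synSpace σ τ (hEV hτ) w)
  let φ (w : List A) : E →ₗ[ℚ] E := (shiftOp (w ++ f)).restrict (hmaps w)
  have hφ (w : List A) (x : E) : (φ w x : List A → ℚ) = shiftOp (w ++ f) x := rfl
  have hφmul (v w : List A) : φ v ∘ₗ φ w = φ (w ++ f ++ v) := by
    ext1 x
    apply Subtype.ext
    simp only [LinearMap.comp_apply, hφ, shiftOp_append]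
  have hφfin : (Set.range φ).Finite := by
    have := hfin.to_subtype
    let F := Set.range fun u : List A => shiftOp u σ
    let act (w : List A) (x : F) : F := ⟨shiftOp (w ++ f) x, by
      obtain ⟨_, u, rfl⟩ := x
      exact ⟨u ++ (w ++ f), shiftOp_append _ _ _⟩⟩
    have hfac : Function.FactorsThrough φ act := by
      intro v w hvw
      have heq : Set.EqOn (shiftOp (v ++ f)) (shiftOp (w ++ f)) V :=
        LinearMap.eqOn_span fun x hx => congrArg Subtype.val (congrFun hvw ⟨x, hx⟩)
      ext1 x
      exact Subtype.ext (heq (hEV x.2))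
    obtain ⟨e, he⟩ := (Function.factorsThrough_iff φ).1 hfac
    rw [he, Set.range_comp]
    exact (Set.toFinite _).image e
  have hφinj (w : List A) (h : φ w ≠ 0) : Function.Injective (φ w) := by
    rw [injective_iff_map_eq_zero]
    intro x hx
    obtain ⟨y, hy⟩ := DFunLike.ne_iff.1 h
    obtain ⟨_, τ, hτ, rfl⟩ := y
    have hne : psiRank σ (f ++ (w ++ f)) ≠ 0 := by
      refine psiRank_ne_zero_of_apply_ne_zero hτ fun h0 => hy (Subtype.ext ?_)
      rw [hφ, ← shiftOp_append, h0]
      rfl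
    exact Subtype.ext (eq_zero_of_psiRank_le (hmin.2 _ hne) x.2 (congrArg Subtype.val hx))
  let σE : E := ⟨σ, hσE⟩
  have hσE0 : σE ≠ 0 := fun h => hσ (congrArg Subtype.val h)
  obtain ⟨C, hC, hCstab⟩ := exists_isCompl_stable (N := Set.range φ \ {0})
    (hφfin.subset Set.sdiff_subset)
    ⟨φ [], ⟨[], rfl⟩, fun h => hσ (by
      have := congrArg Subtype.val (LinearMap.congr_fun h σE)
      rw [hφ] at this
      exact hf.symm.trans this)⟩
    (by
      rintro _ ⟨⟨v, rfl⟩, hv⟩ _ ⟨⟨w, rfl⟩, hw⟩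
      refine ⟨⟨_, (hφmul v w).symm⟩, fun h => hσE0 ?_⟩
      exact hφinj w hw (hφinj v hv (by simpa using LinearMap.congr_fun h σE)))
    (by rintro _ ⟨⟨v, rfl⟩, hv⟩; exact hφinj v hv)
    (U.comap E.subtype)
    (by rintro _ ⟨⟨v, rfl⟩, _⟩ x hx; exact hU x hx (v ++ f))
  let W := Submodule.span ℚ {τ | ∃ c ∈ C, ∃ w : List A, τ = shiftOp w c}
  have hCW (c) (hc : c ∈ C) : (c : List A → ℚ) ∈ W := Submodule.subset_span ⟨c, hc, [], rfl⟩
  have hWV : W ≤ V := by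
    refine Submodule.span_le.2 ?_
    rintro _ ⟨c, -, w, rfl⟩
    exact invariantSub_synSpace σ c (hEV c.2) w
  have hW : InvariantSub W := by
    intro τ hτ u
    refine (Submodule.span_le (p := W.comap (shiftOp u))).2 ?_ hτ
    rintro _ ⟨c, hc, w, rfl⟩
    exact Submodule.subset_span ⟨c, hc, w ++ u, (shiftOp_append _ _ _).symm⟩
  have hWC : W ≤ (C.map E.subtype).comap (shiftOp f) := by
    refine Submodule.span_le.2 ?_
    rintro _ ⟨c, hc, w, rfl⟩
    refine ⟨φ w c, ?_, shiftOp_append _ _ _⟩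
    by_cases h : φ w = 0
    · simp [h]
    · exact hCstab _ ⟨⟨w, rfl⟩, h⟩ c hc
  have hkill (τ) (hτ : τ ∈ U ⊓ W) : shiftOp f τ = 0 := by
    obtain ⟨c, hc, e⟩ := hWC hτ.2
    have hcU : c ∈ U.comap E.subtype := by
      change (c : List A → ℚ) ∈ U
      rw [show (c : List A → ℚ) = shiftOp f τ from e]
      exact hU τ hτ.1 f
    rw [← e, Submodule.disjoint_def.1 hC.disjoint c hcU hc]
    rfl
  refine ⟨W, hWV, hW, ?_, le_antisymm (sup_le hUV hWV) (synSpace_le (hU.sup hW) ?_)⟩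
  · rw [← le_bot_iff, ← hEK]
    intro τ hτ
    refine mem_eventualKer.2 ⟨hUV hτ.1, fun v hv => ?_⟩
    obtain ⟨a, ha⟩ := exists_apply_ne_zero hv.1
    obtain ⟨b, hb⟩ := hrec _ ha
    have hne : psiRank σ (v ++ (b ++ f ++ a ++ v)) ≠ 0 := by
      refine psiRank_ne_zero_of_apply_ne_zero (shiftOp_mem_synSpace σ a) ?_
      simp only [shiftOp_append] at ha hb ⊢
      rwa [hb, hf]
    refine eq_zero_of_psiRank_le (hv.2 _ hne) (Submodule.mem_map_of_mem (hUV hτ.1)) ?_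
    have := hkill (shiftOp (v ++ b) τ) ((hU.inf hW) τ hτ (v ++ b))
    simp only [shiftOp_append] at this ⊢
    simp [this]
  · have : σE ∈ U.comap E.subtype ⊔ C := hC.sup_eq_top ▸ Submodule.mem_top
    obtain ⟨x, hx, c, hc, e⟩ := Submodule.mem_sup.1 this
    rw [show σ = x + c from (congrArg Subtype.val e).symm]
    exact Submodule.add_mem_sup hx (hCW c hc)

lemma charFun_ne_zero {S : Set (List A)} : charFun S ≠ 0 ↔ S.Nonempty := by
  simp [charFun, Set.nonempty_iff_ne_empty, Set.indicator_eq_zero']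

end Birec

open Birec

/-- **Theorem.** A recurrent set `S` is completely reducible over `ℚ` if and only if
its eventual kernel is trivial: `EK(S) = {0}`. -/
theorem completelyReducible_iff_ek_eq_bot {A : Type*} [Fintype A] (S : Set (List A))
    (hS : Recurrent S) :
    CompletelyReducibleLang S ↔ EK S = ⊥ := by
  classical
  have hfin : (Set.range fun u : List A => shiftOp u (charFun S)).Finite := by
    refine (hS.1.image charFun).subset ?_
    rintro _ ⟨u, rfl⟩
    exact ⟨_, ⟨u, rfl⟩, rfl⟩
  have : FiniteDimensional ℚ (synSpace (charFun S)) := FiniteDimensional.span_of_finite ℚ hfin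
  change CompletelyReducibleSeries (charFun S) ↔ eventualKer (charFun S) = ⊥
  by_cases hσ : charFun S = 0
  · have hV : synSpace (charFun S) = ⊥ := by
      rw [eq_bot_iff, synSpace, Submodule.span_le]
      rintro _ ⟨u, rfl⟩
      simp [hσ]
    refine iff_of_true ⟨0, fun _ => ⊥, fun i => i.elim0, fun i => i.elim0, ?_⟩ ?_
    · rw [hV, iSup_of_empty]
    · rw [← le_bot_iff, ← hV]
      exact inf_le_left
  have hrec (a) (ha : shiftOp a (charFun S) ≠ 0) :
      ∃ b, shiftOp (a ++ b) (charFun S) = charFun S := by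
    obtain ⟨b, hb⟩ := hS.2 a [] (charFun_ne_zero.1 ha) (charFun_ne_zero.1 hσ)
    exact ⟨b, congrArg charFun hb⟩
  obtain ⟨f, hf, hmin⟩ := exists_isMin_fix hσ hrec
  exact ⟨fun h => eventualKer_eq_bot_of_completelyReducible h hf hmin, fun h =>
    completelyReducibleSeries_of_compl (invariantSub_synSpace _) fun _ hUV hU =>
      exists_compl_of_eventualKer_eq_bot hfin hrec hσ hf hmin h hUV hU⟩
end

section
/- Let S be a set recognized by a strongly connected unambiguous finite automaton 𝒜. If S is completely reducible over ℚ and dense, then φ_𝒜(S) meets every 𝓗-class of the minimal ideal of the transition monoid φ_𝒜(A*). -/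
namespace Birec

/-- A (nondeterministic) finite automaton. -/
structure UFA (A : Type*) (Q : Type*) where
  step : Q → A → Set Q
  start : Set Q
  accept : Set Q

namespace UFA

variable {A Q : Type*}

/-- `IsPathTo M p w l q` holds iff `l` is the list of successive states (after each
letter) of a path labelled `w` from `p` to `q` in `M`. -/
def IsPathTo (M : UFA A Q) : Q → List A → List Q → Q → Prop
  | p, [], l, q => p = q ∧ l = []
  | p, a :: w, l, q => ∃ r ∈ M.step p a, ∃ l' : List Q, l = r :: l' ∧ IsPathTo M r w l' q

/-- `M.rel w p q` holds iff there is a path labelled `w` from `p` to `q`. -/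
def rel (M : UFA A Q) (w : List A) (p q : Q) : Prop :=
  ∃ l : List Q, M.IsPathTo p w l q

/-- The language recognized by the automaton. -/
def lang (M : UFA A Q) : Set (List A) :=
  {w | ∃ p ∈ M.start, ∃ q ∈ M.accept, M.rel w p q}

/-- The automaton is unambiguous: for any word, there is at most one path from an
initial state to a terminal state with this label. -/
def Unambiguous (M : UFA A Q) : Prop :=
  ∀ (w : List A) (p₁ p₂ q₁ q₂ : Q) (l₁ l₂ : List Q),
    p₁ ∈ M.start → p₂ ∈ M.start → q₁ ∈ M.accept → q₂ ∈ M.accept →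
    M.IsPathTo p₁ w l₁ q₁ → M.IsPathTo p₂ w l₂ q₂ → p₁ = p₂ ∧ l₁ = l₂

/-- The automaton is strongly connected. -/
def StronglyConnected (M : UFA A Q) : Prop := ∀ p q : Q, ∃ w : List A, M.rel w p q

/-- The set `U · w` of states reachable from `U` by reading `w`. -/
def after (M : UFA A Q) (U : Set Q) (w : List A) : Set Q := {q | ∃ p ∈ U, M.rel w p q}

open Classical in
/-- The `{0,1}`-matrix `μ_𝒜(w)` of a word, with rational entries. -/
noncomputable def mat (M : UFA A Q) (w : List A) : Matrix Q Q ℚ :=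
  Matrix.of fun p q => if M.rel w p q then (1 : ℚ) else 0

/-- The rank of a word with respect to an unambiguous automaton: the linear-algebra
rank of its transition matrix. -/
noncomputable def wrank [Fintype Q] (M : UFA A Q) (w : List A) : ℕ := (M.mat w).rank

end UFA

/-- The transition morphism of an (unambiguous) automaton, with values in relations. -/
def UFA.phi {A Q : Type*} (M : UFA A Q) (w : List A) : Q → Q → Prop := M.rel w

/-- Composition of relations. -/
def rcomp {Q : Type*} (f g : Q → Q → Prop) : Q → Q → Prop := fun p q => ∃ r, f p r ∧ g r q

/-- Green's relation `𝓡` in a monoid `M` of relations. -/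
def rGreenR {Q : Type*} (M : Set (Q → Q → Prop)) (m n : Q → Q → Prop) : Prop :=
  (∃ p ∈ M, rcomp m p = n) ∧ ∃ p ∈ M, rcomp n p = m

/-- Green's relation `𝓛` in a monoid `M` of relations. -/
def rGreenL {Q : Type*} (M : Set (Q → Q → Prop)) (m n : Q → Q → Prop) : Prop :=
  (∃ p ∈ M, rcomp p m = n) ∧ ∃ p ∈ M, rcomp p n = m

/-- Green's relation `𝓗`. -/
def rGreenH {Q : Type*} (M : Set (Q → Q → Prop)) (m n : Q → Q → Prop) : Prop :=
  rGreenR M m n ∧ rGreenL M m n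

/-- `I` is a (two-sided) ideal of the monoid `M` of relations. -/
def rIsIdeal {Q : Type*} (M I : Set (Q → Q → Prop)) : Prop :=
  I.Nonempty ∧ I ⊆ M ∧ ∀ m ∈ I, ∀ p ∈ M, ∀ q ∈ M, rcomp (rcomp p m) q ∈ I

/-- `I` is the minimal ideal of the monoid `M` of relations. -/
def rIsMinimalIdeal {Q : Type*} (M I : Set (Q → Q → Prop)) : Prop :=
  rIsIdeal M I ∧ ∀ J : Set (Q → Q → Prop), rIsIdeal M J → I ⊆ J

end Birec

namespace Birec

section FiniteMonoid

variable {N : Type*} [Monoid N] [Finite N]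

theorem exists_pow_mul_self (a : N) : ∃ k : ℕ, 0 < k ∧ a ^ k * a ^ k = a ^ k := by
  obtain ⟨i, j, hij, h⟩ := Finite.exists_ne_map_eq_of_infinite (fun n : ℕ => a ^ n)
  wlog hlt : i < j generalizing i j
  · exact this j i hij.symm h.symm (by omega)
  obtain ⟨d, hd, rfl⟩ : ∃ d, 0 < d ∧ j = i + d := ⟨j - i, by omega, by omega⟩
  have hper : ∀ t n, i ≤ n → a ^ (n + t * d) = a ^ n := by
    intro t
    induction t with
    | zero => intro n _; simp
    | succ t ih =>
      intro n hn
      have hn' : n + (t + 1) * d = (n - i) + (i + d) + t * d := by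
        rw [add_mul]; omega
      have h2 : a ^ (n - i + (i + d)) = a ^ n := by
        rw [pow_add, ← h, ← pow_add]; congr 1; omega
      rw [hn', ih _ (by omega), h2]
  refine ⟨(i + 1) * d, by positivity, ?_⟩
  rw [← pow_add]
  exact hper _ _ (by nlinarith)

theorem exists_mul_right_eq {m p a b : N} (h : m = a * (m * p * m) * b) :
    ∃ q, m * p * m * q = m := by
  obtain ⟨k, hk, hidem⟩ := exists_pow_mul_self a
  have hpow : ∀ n, m = a ^ n * m * (p * m * b) ^ n := by
    intro n
    induction n with
    | zero => simp
    | succ n ih =>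
      calc m = a * (m * p * m) * b := h
        _ = a * m * (p * m * b) := by simp only [mul_assoc]
        _ = a * (a ^ n * m * (p * m * b) ^ n) * (p * m * b) := by rw [← ih]
        _ = _ := by rw [pow_succ' a, pow_succ (p * m * b)]; simp only [mul_assoc]
  have hfix : a ^ k * m = m := by
    conv_lhs => rw [hpow k]
    rw [← mul_assoc, ← mul_assoc, hidem]
    exact (hpow k).symm
  obtain ⟨n, rfl⟩ : ∃ n, k = n + 1 := ⟨k - 1, by omega⟩
  refine ⟨b * (p * m * b) ^ n, ?_⟩
  conv_rhs => rw [hpow (n + 1), hfix, pow_succ']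
  simp only [mul_assoc]

theorem exists_mul_left_eq {m p a b : N} (h : m = a * (m * p * m) * b) :
    ∃ q, q * (m * p * m) = m := by
  have : Finite Nᵐᵒᵖ := Finite.of_equiv N MulOpposite.opEquiv
  obtain ⟨q, hq⟩ := exists_mul_right_eq (N := Nᵐᵒᵖ) (m := .op m) (p := .op p) (a := .op b)
    (b := .op a) (by
      rw [← MulOpposite.op_mul, ← MulOpposite.op_mul, ← MulOpposite.op_mul, ← MulOpposite.op_mul]
      exact congrArg MulOpposite.op (by simpa only [mul_assoc] using h))
  refine ⟨q.unop, ?_⟩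
  simpa only [MulOpposite.unop_mul, MulOpposite.unop_op, mul_assoc] using
    congrArg MulOpposite.unop hq

/-- For an idempotent `e` of the minimal ideal, right translation by an element of the local
monoid `e N e` permutes `e N e`. -/
theorem sum_local_mul [Fintype N] [DecidableEq N] {e : N} (he : e * e = e)
    (hsimple : ∀ p, ∃ a b, e = a * (e * p * e) * b) (p : N) (F : N → ℚ) :
    ∑ g ∈ Finset.univ.filter (fun g => e * g * e = g), F (g * (e * p * e)) =
      ∑ g ∈ Finset.univ.filter (fun g => e * g * e = g), F g := by
  set G := Finset.univ.filter (fun g : N => e * g * e = g) with hG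
  obtain ⟨a, b, hab⟩ := hsimple p
  obtain ⟨q, hq⟩ := exists_mul_right_eq hab
  have hge : ∀ g ∈ G, g * e = g := by
    intro g hg
    have hg := (Finset.mem_filter.1 hg).2
    conv_lhs => rw [← hg]
    rw [mul_assoc, he, hg]
  have heg : ∀ g ∈ G, e * g = g := by
    intro g hg
    have hg := (Finset.mem_filter.1 hg).2
    conv_lhs => rw [← hg]
    rw [← mul_assoc, ← mul_assoc, he, hg]
  have hinj : Set.InjOn (fun g => g * (e * p * e)) (G : Set N) := by
    intro g hg g' hg' h
    have h' := congrArg (· * q) h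
    simpa only [mul_assoc g, mul_assoc g', hq, hge g hg, hge g' hg'] using h'
  have himg : G.image (fun g => g * (e * p * e)) = G := by
    refine Finset.eq_of_subset_of_card_le ?_ (Finset.card_image_of_injOn hinj).ge
    intro h hh
    obtain ⟨g, hg, rfl⟩ := Finset.mem_image.1 hh
    refine Finset.mem_filter.2 ⟨Finset.mem_univ _, ?_⟩
    calc e * (g * (e * p * e)) * e = (e * g) * (e * p * (e * e)) := by simp only [mul_assoc]
      _ = _ := by rw [heg g hg, he]
  conv_rhs => rw [← himg]
  rw [Finset.sum_image hinj]

end FiniteMonoid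

section Series

variable {A : Type*}

theorem shiftOp_shiftOp (u v : List A) (τ : List A → ℚ) :
    shiftOp v (shiftOp u τ) = shiftOp (u ++ v) τ := by
  funext w
  simp [shiftOp]

theorem CompletelyReducibleSeries.exists_components {σ : List A → ℚ}
    (h : CompletelyReducibleSeries σ) :
    ∃ (n : ℕ) (W : Fin n → Submodule ℚ (List A → ℚ)) (s : Fin n → List A → ℚ),
      (∀ i, InvariantSub (W i) ∧ IrreducibleSub (W i)) ∧ iSupIndep W ∧ (∀ i, s i ∈ W i) ∧
      ∑ i, s i = σ := by
  obtain ⟨n, W, hW, hind, hsup⟩ := h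
  have hmem : σ ∈ ⨆ i, W i := by
    rw [hsup]
    exact Submodule.subset_span ⟨[], rfl⟩
  obtain ⟨s, hs⟩ := (Submodule.mem_iSup_iff_exists_finsupp _ _).1 hmem
  refine ⟨n, W, s, fun i => (hW i).2, hind, hs.1, ?_⟩
  rw [← hs.2, Finsupp.sum_fintype _ _ (fun _ => rfl)]

/-- If a completely reducible series `σ` is the composite of a surjective morphism `φ` onto a
finite monoid and a function `f`, then the sums of `f` over the translates `x G y` of the group
`G = e N e` of an idempotent `e` of the minimal ideal `K` are all equal. -/
theorem CompletelyReducibleSeries.sum_translate_eq {N : Type*} [Monoid N] [Fintype N]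
    [DecidableEq N] {σ : List A → ℚ} (hcr : CompletelyReducibleSeries σ) {φ : List A → N}
    (hφ : ∀ u v, φ (u ++ v) = φ u * φ v) (hsurj : Function.Surjective φ) {f : N → ℚ}
    (hf : ∀ w, σ w = f (φ w)) {K : Set N} (hKideal : ∀ m ∈ K, ∀ p q, p * m * q ∈ K)
    (hKsimple : ∀ m ∈ K, ∀ k ∈ K, ∃ a b, m = a * k * b) {e : N} (he : e * e = e) (heK : e ∈ K)
    (x y x' y' : N) :
    ∑ g ∈ Finset.univ.filter (fun g => e * g * e = g), f (x * g * y) =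
      ∑ g ∈ Finset.univ.filter (fun g => e * g * e = g), f (x' * g * y') := by
  have htrans := sum_local_mul he (fun p => hKsimple e heK _ (by
    simpa only [one_mul, mul_assoc] using hKideal e heK 1 (p * e)))
  set G := Finset.univ.filter (fun g : N => e * g * e = g) with hG
  obtain ⟨n, W, s, hW, hind, hs, hsum⟩ := hcr.exists_components
  choose r hr using hsurj
  have hGmem : ∀ g ∈ G, g * e = g ∧ g ∈ K := by
    intro g hg
    have hg := (Finset.mem_filter.1 hg).2
    constructor
    · conv_lhs => rw [← hg]
      rw [mul_assoc, he, hg]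
    · rw [← hg]
      simpa only [mul_assoc, one_mul] using hKideal e heK 1 (g * e)
  let T : List A → List A → (List A → ℚ) →ₗ[ℚ] (List A → ℚ) :=
    fun x y => ∑ g ∈ G, shiftOp (x ++ r g ++ y)
  have hTapp : ∀ x y τ, T x y τ = ∑ g ∈ G, shiftOp (x ++ r g ++ y) τ := by
    intro x y τ
    simp [T, LinearMap.sum_apply]
  have hTW : ∀ x y i, ∀ τ ∈ W i, T x y τ ∈ W i := by
    intro x y i τ hτ
    rw [hTapp]
    exact Submodule.sum_mem _ fun g _ => (hW i).1 τ hτ _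
  have hshift : ∀ x y w τ, shiftOp w (T x y τ) = T x (y ++ w) τ := by
    intro x y w τ
    simp only [hTapp, map_sum, shiftOp_shiftOp, List.append_assoc]
  have hTσ : ∀ x y v, T x y σ v = ∑ g ∈ G, f (φ x * g * (φ y * φ v)) := by
    intro x y v
    rw [hTapp, Finset.sum_apply]
    refine Finset.sum_congr rfl fun g _ => ?_
    change σ (x ++ r g ++ y ++ v) = _
    rw [hf, hφ, hφ, hφ, hr, mul_assoc (φ x * g)]
  -- The action of a word of the minimal ideal does not see the right factor.
  have hkillσ : ∀ x y z, φ z ∈ K → T x (y ++ z) σ = T x z σ := by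
    intro x y z hz
    obtain ⟨a, b, hab⟩ := hKsimple _ hz e heK
    have key : ∀ y v, ∑ g ∈ G, f (φ x * g * (y * φ z * φ v)) =
        ∑ g ∈ G, f (φ x * g * (b * φ v)) := by
      intro y v
      rw [← htrans (y * a) (fun g => f (φ x * g * (b * φ v)))]
      refine Finset.sum_congr rfl fun g hg => ?_
      conv_lhs => rw [hab, ← (hGmem g hg).1]
      simp only [mul_assoc]
    funext v
    have h1 := key 1 v
    rw [one_mul] at h1
    rw [hTσ, hTσ, hφ, key, h1]
  have hcomp : ∀ S : (List A → ℚ) →ₗ[ℚ] (List A → ℚ), (∀ i, ∀ τ ∈ W i, S τ ∈ W i) →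
      S σ = 0 → ∀ i, S (s i) = 0 := by
    intro S hS hσ i
    refine (iSupIndep_iff_finsetSum_eq_zero_imp_eq_zero W).1 hind Finset.univ
      (fun i => S (s i)) (fun i _ => hS i _ (hs i)) ?_ i (Finset.mem_univ i)
    rw [← map_sum, hsum, hσ]
  have hkill : ∀ x y z, φ z ∈ K → ∀ i, T x (y ++ z) (s i) = T x z (s i) := by
    intro x y z hz i
    have := hcomp (T x (y ++ z) - T x z)
      (fun i τ hτ => Submodule.sub_mem _ (hTW _ _ i τ hτ) (hTW _ _ i τ hτ))
      (by rw [LinearMap.sub_apply, hkillσ x y z hz, sub_self]) i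
    rwa [LinearMap.sub_apply, sub_eq_zero] at this
  have hright : ∀ x y i, T x y (s i) = T x [] (s i) := by
    intro x y i
    let Z : Submodule ℚ (List A → ℚ) :=
      W i ⊓ ⨅ z ∈ {z : List A | φ z ∈ K}, LinearMap.ker (shiftOp z)
    have hZ : ∀ τ, τ ∈ Z ↔ τ ∈ W i ∧ ∀ z, φ z ∈ K → shiftOp z τ = 0 := by
      intro τ
      simp [Z, Submodule.mem_iInf]
    have hZinv : InvariantSub Z := by
      intro τ hτ u
      rw [hZ] at hτ ⊢
      refine ⟨(hW i).1 τ hτ.1 u, fun z hz => ?_⟩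
      rw [shiftOp_shiftOp]
      refine hτ.2 _ ?_
      rw [hφ]
      simpa using hKideal _ hz (φ u) 1
    rcases (hW i).2.2 Z inf_le_left hZinv with h | h
    · have hmem : T x y (s i) - T x [] (s i) ∈ Z := by
        rw [hZ]
        refine ⟨Submodule.sub_mem _ (hTW _ _ i _ (hs i)) (hTW _ _ i _ (hs i)), fun z hz => ?_⟩
        rw [map_sub, hshift, hshift, hkill x y z hz, List.nil_append, sub_self]
      rw [h, Submodule.mem_bot, sub_eq_zero] at hmem
      exact hmem
    · have hsi : ∀ z, φ z ∈ K → shiftOp z (s i) = 0 := ((hZ _).1 (h ▸ hs i)).2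
      have hzero : ∀ y, T x y (s i) = 0 := by
        intro y
        rw [hTapp]
        refine Finset.sum_eq_zero fun g hg => hsi _ ?_
        rw [hφ, hφ, hr]
        exact hKideal g (hGmem g hg).2 _ _
      rw [hzero, hzero]
  have hleft : ∀ x i, T x [] (s i) = T [] [] (s i) := by
    intro x i
    let F : Submodule ℚ (List A → ℚ) :=
      W i ⊓ ⨅ w : List A, LinearMap.ker (shiftOp w - LinearMap.id)
    have hF : ∀ τ, τ ∈ F ↔ τ ∈ W i ∧ ∀ w, shiftOp w τ = τ := by
      intro τ
      simp [F, Submodule.mem_iInf, sub_eq_zero]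
    have hFinv : InvariantSub F := by
      intro τ hτ u
      rwa [((hF τ).1 hτ).2 u]
    have hmem : ∀ x, T x [] (s i) ∈ F := by
      intro x
      rw [hF]
      refine ⟨hTW _ _ i _ (hs i), fun w => ?_⟩
      rw [hshift, List.nil_append, hright]
    rcases (hW i).2.2 F inf_le_left hFinv with h | h
    · rw [h] at hmem
      rw [(Submodule.mem_bot _).1 (hmem x), (Submodule.mem_bot _).1 (hmem [])]
    · have hsi := ((hF _).1 (h ▸ hs i)).2
      simp only [hTapp, hsi]
  have hconst : ∀ x y, T x y σ = T [] [] σ := by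
    intro x y
    rw [← hsum, map_sum, map_sum]
    exact Finset.sum_congr rfl fun i _ => (hright x y i).trans (hleft x i)
  have heval : ∀ x y, T (r x) (r y) σ (r 1) = ∑ g ∈ G, f (x * g * y) := by
    intro x y
    simp only [hTσ, hr, mul_one]
  rw [← heval, ← heval, hconst, hconst (r x')]

/-- A completely reducible language recognized by a surjective morphism onto a finite monoid and
meeting the minimal ideal meets `m N m` for every `m`. -/
theorem exists_mul_mul_mem {N : Type*} [Monoid N] [Finite N] {S : Set (List A)}
    (hcr : CompletelyReducibleLang S) {φ : List A → N}
    (hφ : ∀ u v, φ (u ++ v) = φ u * φ v) (hsurj : Function.Surjective φ) {P : Set N}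
    (hP : ∀ w, w ∈ S ↔ φ w ∈ P) {K : Set N} (hKideal : ∀ m ∈ K, ∀ p q, p * m * q ∈ K)
    (hKsimple : ∀ m ∈ K, ∀ k ∈ K, ∃ a b, m = a * k * b) {k : N} (hk : k ∈ K) (hkP : k ∈ P)
    (m : N) : ∃ g, m * g * m ∈ P := by
  classical
  have := Fintype.ofFinite N
  obtain ⟨d, hd, he⟩ := exists_pow_mul_self k
  have heK : k ^ d ∈ K := by
    obtain ⟨c, rfl⟩ : ∃ c, d = c + 1 := ⟨d - 1, by omega⟩
    rw [pow_succ']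
    simpa using hKideal k hk 1 (k ^ c)
  obtain ⟨a, b, hab⟩ := hKsimple k hk _ heK
  have hf : ∀ w, charFun S w = P.indicator 1 (φ w) := by
    intro w
    simp only [charFun, Set.indicator_apply, hP]
    rfl
  have hsum := CompletelyReducibleSeries.sum_translate_eq hcr hφ hsurj hf hKideal hKsimple he heK
    a b m m
  by_contra! hno
  rw [Finset.sum_eq_zero (f := fun g => P.indicator 1 (m * g * m))
    (fun g _ => Set.indicator_of_notMem (hno g) _)] at hsum
  have hnonneg : ∀ n, (0 : ℚ) ≤ P.indicator 1 n :=
    fun n => Set.indicator_nonneg (fun _ _ => zero_le_one) n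
  have h1 := (Finset.sum_eq_zero_iff_of_nonneg (fun g _ => hnonneg _)).1 hsum (k ^ d)
    (by simp [he])
  rw [← hab, Set.indicator_of_mem hkP] at h1
  exact one_ne_zero h1

end Series

/-- The monoid of relations under composition. -/
abbrev relMonoid (Q : Type*) : Monoid (Q → Q → Prop) where
  mul := rcomp
  one := fun p q => p = q
  mul_assoc f g h := by
    funext p q
    apply propext
    constructor
    · rintro ⟨r, ⟨t, h1, h2⟩, h3⟩
      exact ⟨t, h1, r, h2, h3⟩
    · rintro ⟨t, h1, r, h2, h3⟩
      exact ⟨r, ⟨t, h1, h2⟩, h3⟩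
  one_mul f := by
    funext p q
    apply propext
    constructor
    · rintro ⟨r, rfl, h⟩
      exact h
    · exact fun h => ⟨p, rfl, h⟩
  mul_one f := by
    funext p q
    apply propext
    constructor
    · rintro ⟨r, h, rfl⟩
      exact h
    · exact fun h => ⟨q, h, rfl⟩

namespace UFA

variable {A Q : Type*}

theorem rel_nil (M : UFA A Q) (p q : Q) : M.rel [] p q ↔ p = q := by
  simp [rel, IsPathTo]

theorem rel_cons (M : UFA A Q) (a : A) (w : List A) (p q : Q) :
    M.rel (a :: w) p q ↔ ∃ r ∈ M.step p a, M.rel w r q := by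
  constructor
  · rintro ⟨l, r, hr, l', -, h⟩
    exact ⟨r, hr, l', h⟩
  · rintro ⟨r, hr, l', h⟩
    exact ⟨_, r, hr, l', rfl, h⟩

theorem phi_nil (M : UFA A Q) : M.phi [] = fun p q => p = q := by
  funext p q
  exact propext (M.rel_nil p q)

theorem phi_append (M : UFA A Q) (u v : List A) :
    M.phi (u ++ v) = rcomp (M.phi u) (M.phi v) := by
  induction u with
  | nil => rw [phi_nil]; exact ((relMonoid Q).one_mul (M.phi v)).symm
  | cons a u ih =>
    funext p q
    apply propext
    change M.rel (a :: (u ++ v)) p q ↔ ∃ r, M.rel (a :: u) p r ∧ M.rel v r q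
    simp only [rel_cons]
    have ih' : ∀ p q, M.rel (u ++ v) p q ↔ ∃ r, M.rel u p r ∧ M.rel v r q :=
      fun p q => iff_of_eq (congrFun (congrFun ih p) q)
    simp only [ih']
    constructor
    · rintro ⟨t, ht, r, h1, h2⟩
      exact ⟨r, ⟨t, ht, h1⟩, h2⟩
    · rintro ⟨r, ⟨t, ht, h1⟩, h2⟩
      exact ⟨t, ht, r, h1, h2⟩

/-- The transition monoid of an automaton. -/
def transitionMonoid (M : UFA A Q) : @Submonoid (Q → Q → Prop) (relMonoid Q).toMulOneClass :=
  letI := relMonoid Q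
  { carrier := Set.range M.phi
    mul_mem' := by
      rintro _ _ ⟨u, rfl⟩ ⟨v, rfl⟩
      exact ⟨u ++ v, M.phi_append u v⟩
    one_mem' := ⟨[], M.phi_nil⟩ }

end UFA

end Birec

open Birec

/-- **Corollary.** Let `S` be a set recognized by a strongly connected unambiguous
finite automaton `𝒜`.  If `S` is completely reducible over `ℚ` and dense, then
`φ_𝒜(S)` meets every `𝓗`-class of the minimal ideal of the transition monoid
`φ_𝒜(A*)`. -/
theorem phi_meets_every_H_class {A Q : Type*} [Fintype A] [Fintype Q]
    (M : UFA A Q) (hconn : M.StronglyConnected) (hunamb : M.Unambiguous)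
    (hcr : CompletelyReducibleLang M.lang) (hdense : LangDense M.lang)
    (K : Set (Q → Q → Prop)) (hK : rIsMinimalIdeal (Set.range M.phi) K)
    (m : Q → Q → Prop) (hm : m ∈ K) :
    ∃ u ∈ M.lang, rGreenH (Set.range M.phi) (M.phi u) m := by
  let _ := relMonoid Q
  let N := M.transitionMonoid
  let φ : List A → N := fun w => ⟨M.phi w, w, rfl⟩
  have hφ : ∀ u v, φ (u ++ v) = φ u * φ v := fun u v => Subtype.ext (M.phi_append u v)
  have hsurj : Function.Surjective φ := by
    rintro ⟨_, w, rfl⟩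
    exact ⟨w, rfl⟩
  obtain ⟨⟨-, hKsub, hKmul⟩, hKmin⟩ := hK
  let K' : Set N := {n | n.1 ∈ K}
  have hideal : ∀ m ∈ K', ∀ p q, p * m * q ∈ K' :=
    fun m hm p q => hKmul m.1 hm p.1 p.2 q.1 q.2
  have hsimple : ∀ m ∈ K', ∀ k ∈ K', ∃ a b, m = a * k * b := by
    intro m hm k _
    have hJ : rIsIdeal (Set.range M.phi) {n | ∃ a b : N, (a * k * b).1 = n} := by
      refine ⟨⟨_, 1, 1, rfl⟩, ?_, ?_⟩
      · rintro _ ⟨a, b, rfl⟩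
        exact (a * k * b).2
      · rintro _ ⟨a, b, rfl⟩ p hp q hq
        refine ⟨⟨p, hp⟩ * a, b * ⟨q, hq⟩, ?_⟩
        have h : (⟨p, hp⟩ : N) * a * k * (b * ⟨q, hq⟩) = ⟨p, hp⟩ * (a * k * b) * ⟨q, hq⟩ := by
          simp only [mul_assoc]
        exact congrArg Subtype.val h
    obtain ⟨a, b, hab⟩ := hKmin _ hJ hm
    exact ⟨a, b, Subtype.ext hab.symm⟩
  let P : Set N := {n | ∃ p ∈ M.start, ∃ q ∈ M.accept, n.1 p q}
  let m' : N := ⟨m, hKsub hm⟩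
  obtain ⟨w, hw⟩ := hsurj m'
  obtain ⟨u, v, huv⟩ := hdense w
  have hkK : φ (u ++ w ++ v) ∈ K' := by
    rw [hφ, hφ, hw]
    exact hideal m' hm _ _
  obtain ⟨g, hg⟩ := exists_mul_mul_mem (P := P) hcr hφ hsurj (fun _ => Iff.rfl) hideal hsimple
    hkK huv m'
  obtain ⟨z, hz⟩ := hsurj (m' * g * m')
  have hmem : m' * g * m' ∈ K' := by
    simpa only [one_mul, mul_assoc] using hideal m' hm 1 (g * m')
  obtain ⟨a, b, hab⟩ := hsimple m' hm _ hmem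
  obtain ⟨q, hq⟩ := exists_mul_right_eq hab
  obtain ⟨q', hq'⟩ := exists_mul_left_eq hab
  have hz' : M.phi z = (m' * g * m').1 := congrArg Subtype.val hz
  refine ⟨z, ?_, ?_⟩
  · rw [← hz] at hg
    exact hg
  · rw [hz']
    refine ⟨⟨⟨q.1, q.2, congrArg Subtype.val hq⟩, ⟨(g * m').1, (g * m').2, ?_⟩⟩,
      ⟨⟨q'.1, q'.2, congrArg Subtype.val hq'⟩, ⟨(m' * g).1, (m' * g).2, rfl⟩⟩⟩
    exact congrArg Subtype.val (mul_assoc m' g m').symm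
end
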